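/- Let S = (X, (φ_j)_{j∈ℕ}, (q_j)_{j∈ℕ}) be a γ-uniformly contractive mpCIFS on a nonempty compact metric space X. Then there exists a unique idempotent probability ν on X such that M(ν) = ν, where M(μ)(f) = sup_{j∈ℕ} ( q_j + μ(f ∘ φ_j) ); moreover, for any τ ∈ (γ,1) and any initial idempotent probability μ, the iterates M^n(μ) converge to ν with respect to the metric d̃_{γ,τ}. -/

import Mathlib

open Filter Topology

def IsIdempotentProb {X : Type*} [TopologicalSpace X] (μ : C(X, ℝ) → ℝ) : Prop :=
  (∀ (c : ℝ) (f : C(X, ℝ)), μ (ContinuousMap.const X c + f) = c + μ f) ∧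
  (∀ f g : C(X, ℝ), μ (f ⊔ g) = max (μ f) (μ g)) ∧
  μ 0 = 0

/-- The pseudometric `d_a` on idempotent probabilities. -/
noncomputable def dLip {X : Type*} [MetricSpace X] (a : ℝ) (μ ν : C(X, ℝ) → ℝ) : ℝ :=
  sSup { r : ℝ | ∃ g : C(X, ℝ), LipschitzWith (Real.toNNReal a) g ∧ r = |μ g - ν g| }

/-- The metric `d̃_{β,τ}` on idempotent probabilities. -/
noncomputable def dtilde {X : Type*} [MetricSpace X] (β τ : ℝ) (μ ν : C(X, ℝ) → ℝ) : ℝ :=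
  ∑' i : ℤ, (τ ^ i.natAbs / β ^ i) * dLip (β ^ i) μ ν

/-!
Composing with a `K`-Lipschitz map turns the oscillation of `f` at scale `K * r` into one at scale
`r`, so `n` applications of the Markov operator `M` reduce the comparison of `M^n μ f` with
`M^n ν f` to the oscillation of `f` at scale `K ^ n * diam X`, uniformly in `μ` and `ν`. Uniform
continuity of `f` makes this small: orbits are pointwise Cauchy, and a pointwise limit is fixed
because the bound holds uniformly over the maps `φ j`. For `f` with Lipschitz constant `β ^ i` the
bound is `β ^ i * K ^ n * diam X`, and the weights `τ ^ |i| / β ^ i` leave a summable series times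
`K ^ n`.
-/

theorem dist_ciSup_ciSup_le {ι : Sort*} [Nonempty ι] {u v : ι → ℝ} {ε : ℝ}
    (hu : BddAbove (Set.range u)) (hv : BddAbove (Set.range v)) (h : ∀ i, dist (u i) (v i) ≤ ε) :
    dist (⨆ i, u i) (⨆ i, v i) ≤ ε := by
  have ciSup_le_add {u v : ι → ℝ} (hv : BddAbove (Set.range v))
      (h : ∀ i, dist (u i) (v i) ≤ ε) : ⨆ i, u i ≤ (⨆ i, v i) + ε :=
    ciSup_le fun i => by
      linarith [le_ciSup hv i, (le_abs_self _).trans (Real.dist_eq (u i) (v i) ▸ h i)]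
  have huv := ciSup_le_add hv h
  have hvu := ciSup_le_add hu fun i => (dist_comm _ _).trans_le (h i)
  rw [Real.dist_eq, abs_sub_le_iff]
  constructor <;> linarith

theorem nonempty_of_isLUB_range {α : Type*} {ι : Sort*} [Preorder α] [NoBotOrder α] {q : ι → α}
    {a : α} (hq : IsLUB (Set.range q) a) : Nonempty ι :=
  Set.range_nonempty_iff_nonempty.mp hq.nonempty

theorem tendsto_pow_mul_const_nhds_zero {r : ℝ} (hr0 : 0 ≤ r) (hr1 : r < 1) (c : ℝ) :
    Tendsto (fun n : ℕ => r ^ n * c) atTop (𝓝 0) := by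
  simpa using (tendsto_pow_atTop_nhds_zero_of_lt_one hr0 hr1).mul_const c

theorem summable_pow_natAbs {τ : ℝ} (hτ0 : 0 ≤ τ) (hτ1 : τ < 1) :
    Summable fun i : ℤ => τ ^ i.natAbs :=
  .of_nat_of_neg (by simpa using summable_geometric_of_lt_one hτ0 hτ1)
    (by simpa using summable_geometric_of_lt_one hτ0 hτ1)

/-- The modulus of continuity of `f` at scale `r` is at most `ε`; phrased as a bound rather than as
a supremum, which could be a junk value. It controls how far `M^n μ` and `M^n ν` differ at `f`. -/
def OscillationLE {X Y : Type*} [PseudoMetricSpace X] [PseudoMetricSpace Y] (f : X → Y)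
    (r ε : ℝ) : Prop :=
  ∀ x y, dist x y ≤ r → dist (f x) (f y) ≤ ε

section Oscillation

variable {X Y Z : Type*} [PseudoMetricSpace X] [PseudoMetricSpace Y] [PseudoMetricSpace Z]

theorem OscillationLE.comp_lipschitzWith {f : Y → Z} {g : X → Y} {K : NNReal} {r ε : ℝ}
    (hf : OscillationLE f (K * r) ε) (hg : LipschitzWith K g) : OscillationLE (f ∘ g) r ε :=
  fun x y hxy => hf _ _ <| (hg.dist_le_mul x y).trans <| by gcongr

theorem oscillationLE_of_lipschitzWith {f : X → Y} {K : NNReal} (hf : LipschitzWith K f) (r : ℝ) :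
    OscillationLE f r (K * r) :=
  fun x y hxy => (hf.dist_le_mul x y).trans <| by gcongr

theorem eventually_oscillationLE {f : X → Y} (hf : UniformContinuous f) {ε : ℝ} (hε : 0 < ε) :
    ∀ᶠ r in 𝓝 0, OscillationLE f r ε := by
  obtain ⟨δ, hδ, h⟩ := Metric.uniformContinuous_iff.mp hf ε hε
  filter_upwards [gt_mem_nhds hδ] with r hr x y hxy
  exact (h (hxy.trans_lt hr)).le

end Oscillation

namespace IsIdempotentProb

variable {X : Type*} [TopologicalSpace X] {μ ν : C(X, ℝ) → ℝ} {f : C(X, ℝ)}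

theorem map_const_add (hμ : IsIdempotentProb μ) (c : ℝ) (f : C(X, ℝ)) :
    μ (ContinuousMap.const X c + f) = c + μ f :=
  hμ.1 c f

theorem map_sup (hμ : IsIdempotentProb μ) (f g : C(X, ℝ)) : μ (f ⊔ g) = max (μ f) (μ g) :=
  hμ.2.1 f g

theorem map_zero (hμ : IsIdempotentProb μ) : μ 0 = 0 :=
  hμ.2.2

theorem map_const (hμ : IsIdempotentProb μ) (c : ℝ) : μ (ContinuousMap.const X c) = c := by
  simpa [hμ.map_zero] using hμ.map_const_add c 0

theorem monotone (hμ : IsIdempotentProb μ) : Monotone μ := fun f g hfg => by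
  rw [← sup_eq_right.mpr hfg, hμ.map_sup]
  exact le_max_left _ _

theorem map_le (hμ : IsIdempotentProb μ) {b : ℝ} (hf : ∀ x, f x ≤ b) : μ f ≤ b :=
  (hμ.monotone (show f ≤ ContinuousMap.const X b from hf)).trans_eq (hμ.map_const b)

theorem le_map (hμ : IsIdempotentProb μ) {a : ℝ} (hf : ∀ x, a ≤ f x) : a ≤ μ f :=
  (hμ.map_const a).symm.trans_le (hμ.monotone (show ContinuousMap.const X a ≤ f from hf))

theorem dist_le_of_forall_dist_le (hμ : IsIdempotentProb μ) (hν : IsIdempotentProb ν) {ε : ℝ}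
    (hf : ∀ x y, dist (f x) (f y) ≤ ε) : dist (μ f) (ν f) ≤ ε := by
  have sub_le {μ ν : C(X, ℝ) → ℝ} (hμ : IsIdempotentProb μ) (hν : IsIdempotentProb ν) :
      μ f - ε ≤ ν f := by
    refine hν.le_map fun y => sub_le_iff_le_add.mpr <| hμ.map_le fun x => ?_
    linarith [(le_abs_self _).trans (Real.dist_eq (f x) (f y) ▸ hf x y)]
  rw [Real.dist_eq, abs_sub_le_iff]
  constructor <;> linarith [sub_le hμ hν, sub_le hν hμ]

theorem eval (x : X) : IsIdempotentProb fun f : C(X, ℝ) => f x :=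
  ⟨fun _ _ => rfl, fun _ _ => rfl, rfl⟩

theorem isClosed_setOf : IsClosed {μ : C(X, ℝ) → ℝ | IsIdempotentProb μ} := by
  simp only [IsIdempotentProb, Set.ofPred_and, Set.ofPred_forall]
  refine .inter (isClosed_iInter fun c => isClosed_iInter fun f => ?_)
    (.inter (isClosed_iInter fun f => isClosed_iInter fun g => ?_) ?_) <;>
  exact isClosed_eq (by fun_prop) (by fun_prop)

end IsIdempotentProb

/-- The max-plus Markov (transfer) operator `M(μ)(f) = sup_j (q_j + μ(f ∘ φ_j))` of an iterated
function system. The index type is arbitrary; the supremum is a junk value unless the family is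
bounded above. -/
noncomputable def maxPlusMarkov {X ι : Type*} [TopologicalSpace X] (Φ : ι → C(X, X)) (q : ι → ℝ)
    (μ : C(X, ℝ) → ℝ) (f : C(X, ℝ)) : ℝ :=
  ⨆ j, (q j + μ (f.comp (Φ j)))

section Markov

variable {X ι : Type*} [TopologicalSpace X] [CompactSpace X] {Φ : ι → C(X, X)} {q : ι → ℝ}
  {μ ν : C(X, ℝ) → ℝ}

theorem bddAbove_range_maxPlusMarkov (hq : BddAbove (Set.range q)) (hμ : IsIdempotentProb μ)
    (f : C(X, ℝ)) : BddAbove (Set.range fun j => q j + μ (f.comp (Φ j))) := by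
  refine hq.range_add ⟨‖f‖, ?_⟩
  rintro _ ⟨j, rfl⟩
  exact hμ.map_le fun x => (le_abs_self _).trans (f.norm_coe_le_norm _)

theorem maxPlusMarkov_sup [Nonempty ι] (hq : BddAbove (Set.range q)) (hμ : IsIdempotentProb μ)
    (f g : C(X, ℝ)) : maxPlusMarkov Φ q μ (f ⊔ g) =
      max (maxPlusMarkov Φ q μ f) (maxPlusMarkov Φ q μ g) := by
  have hterm (j : ι) : q j + μ ((f ⊔ g).comp (Φ j)) =
      max (q j + μ (f.comp (Φ j))) (q j + μ (g.comp (Φ j))) := by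
    rw [max_add_add_left, ← hμ.map_sup]
    rfl
  simp only [maxPlusMarkov, hterm]
  exact ciSup_sup_eq (bddAbove_range_maxPlusMarkov hq hμ f) (bddAbove_range_maxPlusMarkov hq hμ g)

theorem maxPlusMarkov_const_add [Nonempty ι] (hq : BddAbove (Set.range q))
    (hμ : IsIdempotentProb μ) (c : ℝ) (f : C(X, ℝ)) :
    maxPlusMarkov Φ q μ (ContinuousMap.const X c + f) = c + maxPlusMarkov Φ q μ f := by
  have hterm (j : ι) : q j + μ ((ContinuousMap.const X c + f).comp (Φ j)) =
      c + (q j + μ (f.comp (Φ j))) := by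
    rw [add_left_comm, ← hμ.map_const_add c]
    rfl
  simp only [maxPlusMarkov, hterm]
  exact (add_ciSup (bddAbove_range_maxPlusMarkov hq hμ f) c).symm

theorem isIdempotentProb_maxPlusMarkov (hq : IsLUB (Set.range q) 0) (hμ : IsIdempotentProb μ) :
    IsIdempotentProb (maxPlusMarkov Φ q μ) := by
  have : Nonempty ι := nonempty_of_isLUB_range hq
  refine ⟨maxPlusMarkov_const_add hq.bddAbove hμ, maxPlusMarkov_sup hq.bddAbove hμ, ?_⟩
  simp only [maxPlusMarkov, ContinuousMap.zero_comp, hμ.map_zero, add_zero]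
  exact hq.ciSup_eq

theorem isIdempotentProb_iterate_maxPlusMarkov (hq : IsLUB (Set.range q) 0)
    (hμ : IsIdempotentProb μ) (n : ℕ) : IsIdempotentProb ((maxPlusMarkov Φ q)^[n] μ) :=
  Function.Iterate.rec IsIdempotentProb hμ (fun _ => isIdempotentProb_maxPlusMarkov hq) n

theorem dist_maxPlusMarkov_le [Nonempty ι] (hq : BddAbove (Set.range q))
    (hμ : IsIdempotentProb μ) (hν : IsIdempotentProb ν) {f : C(X, ℝ)} {ε : ℝ}
    (h : ∀ j, dist (μ (f.comp (Φ j))) (ν (f.comp (Φ j))) ≤ ε) :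
    dist (maxPlusMarkov Φ q μ f) (maxPlusMarkov Φ q ν f) ≤ ε :=
  dist_ciSup_ciSup_le (bddAbove_range_maxPlusMarkov hq hμ f) (bddAbove_range_maxPlusMarkov hq hν f)
    fun j => (dist_add_left _ _ _).trans_le (h j)

end Markov

section Contraction

variable {X ι : Type*} [PseudoMetricSpace X] [CompactSpace X] {K : NNReal} {Φ : ι → C(X, X)}
  {q : ι → ℝ} {μ ν : C(X, ℝ) → ℝ}

theorem eventually_oscillationLE_pow_mul_diam (hK : K < 1) (f : C(X, ℝ)) {ε : ℝ} (hε : 0 < ε) :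
    ∀ᶠ n : ℕ in atTop, OscillationLE f (K ^ n * Metric.diam (Set.univ : Set X)) ε := by
  have hf := CompactSpace.uniformContinuous_of_continuous f.continuous
  exact (tendsto_pow_mul_const_nhds_zero K.coe_nonneg hK _).eventually
    (eventually_oscillationLE hf hε)

theorem dist_iterate_maxPlusMarkov_le (hΦ : ∀ j, LipschitzWith K (Φ j))
    (hq : IsLUB (Set.range q) 0) (hμ : IsIdempotentProb μ) (hν : IsIdempotentProb ν) {n : ℕ}
    {f : C(X, ℝ)} {ε : ℝ} (hf : OscillationLE f (K ^ n * Metric.diam (Set.univ : Set X)) ε) :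
    dist ((maxPlusMarkov Φ q)^[n] μ f) ((maxPlusMarkov Φ q)^[n] ν f) ≤ ε := by
  have : Nonempty ι := nonempty_of_isLUB_range hq
  induction n generalizing f with
  | zero =>
    refine hμ.dist_le_of_forall_dist_le hν fun x y => hf x y ?_
    simpa using Metric.dist_le_diam_of_mem isCompact_univ.isBounded (Set.mem_univ x)
      (Set.mem_univ y)
  | succ n ih =>
    rw [pow_succ', mul_assoc] at hf
    rw [Function.iterate_succ_apply', Function.iterate_succ_apply']
    exact dist_maxPlusMarkov_le hq.bddAbove (isIdempotentProb_iterate_maxPlusMarkov hq hμ n)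
      (isIdempotentProb_iterate_maxPlusMarkov hq hν n) fun j => ih (hf.comp_lipschitzWith (hΦ j))

theorem dist_iterate_maxPlusMarkov_iterate_le (hΦ : ∀ j, LipschitzWith K (Φ j))
    (hq : IsLUB (Set.range q) 0) (hμ : IsIdempotentProb μ) {m n : ℕ} (hnm : n ≤ m)
    {f : C(X, ℝ)} {ε : ℝ} (hf : OscillationLE f (K ^ n * Metric.diam (Set.univ : Set X)) ε) :
    dist ((maxPlusMarkov Φ q)^[m] μ f) ((maxPlusMarkov Φ q)^[n] μ f) ≤ ε := by
  obtain ⟨k, rfl⟩ := Nat.exists_eq_add_of_le hnm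
  rw [Function.iterate_add_apply]
  exact dist_iterate_maxPlusMarkov_le hΦ hq (isIdempotentProb_iterate_maxPlusMarkov hq hμ k) hμ hf

theorem exists_tendsto_iterate_maxPlusMarkov (hK : K < 1) (hΦ : ∀ j, LipschitzWith K (Φ j))
    (hq : IsLUB (Set.range q) 0) (hμ : IsIdempotentProb μ) :
    ∃ ν, IsIdempotentProb ν ∧ Tendsto (fun n => (maxPlusMarkov Φ q)^[n] μ) atTop (𝓝 ν) := by
  have hcauchy (f : C(X, ℝ)) : CauchySeq fun n => (maxPlusMarkov Φ q)^[n] μ f := by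
    refine Metric.cauchySeq_iff'.mpr fun ε hε => ?_
    obtain ⟨N, hN⟩ := (eventually_oscillationLE_pow_mul_diam hK f (half_pos hε)).exists
    exact ⟨N, fun n hn =>
      (dist_iterate_maxPlusMarkov_iterate_le hΦ hq hμ hn hN).trans_lt (half_lt_self hε)⟩
  choose ν hν using fun f => cauchySeq_tendsto_of_complete (hcauchy f)
  have hlim : Tendsto (fun n => (maxPlusMarkov Φ q)^[n] μ) atTop (𝓝 ν) := tendsto_pi_nhds.mpr hν
  exact ⟨ν, IsIdempotentProb.isClosed_setOf.mem_of_tendsto hlim <|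
    .of_forall (isIdempotentProb_iterate_maxPlusMarkov hq hμ), hlim⟩

theorem maxPlusMarkov_eq_self_of_tendsto_iterate (hK : K < 1) (hΦ : ∀ j, LipschitzWith K (Φ j))
    (hq : IsLUB (Set.range q) 0) (hμ : IsIdempotentProb μ) (hν : IsIdempotentProb ν)
    (hlim : Tendsto (fun n => (maxPlusMarkov Φ q)^[n] μ) atTop (𝓝 ν)) :
    maxPlusMarkov Φ q ν = ν := by
  have : Nonempty ι := nonempty_of_isLUB_range hq
  have hdist {n : ℕ} {f : C(X, ℝ)} {ε : ℝ}
      (hf : OscillationLE f (K ^ n * Metric.diam (Set.univ : Set X)) ε) :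
      dist (ν f) ((maxPlusMarkov Φ q)^[n] μ f) ≤ ε :=
    le_of_tendsto ((tendsto_pi_nhds.mp hlim f).dist tendsto_const_nhds) <|
      (eventually_ge_atTop n).mono fun _ hm =>
        dist_iterate_maxPlusMarkov_iterate_le hΦ hq hμ hm hf
  funext f
  refine eq_of_forall_dist_le fun ε hε => ?_
  obtain ⟨n, hn⟩ := ((tendsto_add_atTop_nat 1).eventually
    (eventually_oscillationLE_pow_mul_diam hK f (half_pos hε))).exists
  have hcomp (j : ι) :
      dist (ν (f.comp (Φ j))) ((maxPlusMarkov Φ q)^[n] μ (f.comp (Φ j))) ≤ ε / 2 := by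
    rw [pow_succ', mul_assoc] at hn
    exact hdist (hn.comp_lipschitzWith (hΦ j))
  calc dist (maxPlusMarkov Φ q ν f) (ν f)
      ≤ dist (maxPlusMarkov Φ q ν f) ((maxPlusMarkov Φ q)^[n + 1] μ f) +
          dist (ν f) ((maxPlusMarkov Φ q)^[n + 1] μ f) := dist_triangle_right _ _ _
    _ ≤ ε / 2 + ε / 2 := by
        gcongr
        · rw [Function.iterate_succ_apply']
          exact dist_maxPlusMarkov_le hq.bddAbove hν
            (isIdempotentProb_iterate_maxPlusMarkov hq hμ n) hcomp
        · exact hdist hn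
    _ = ε := add_halves ε

theorem exists_isIdempotentProb_maxPlusMarkov_eq_self [Nonempty X] (hK : K < 1)
    (hΦ : ∀ j, LipschitzWith K (Φ j)) (hq : IsLUB (Set.range q) 0) :
    ∃ ν, IsIdempotentProb ν ∧ maxPlusMarkov Φ q ν = ν := by
  have heval := IsIdempotentProb.eval (Classical.arbitrary X)
  obtain ⟨ν, hν, hlim⟩ := exists_tendsto_iterate_maxPlusMarkov hK hΦ hq heval
  exact ⟨ν, hν, maxPlusMarkov_eq_self_of_tendsto_iterate hK hΦ hq heval hν hlim⟩

theorem eq_of_maxPlusMarkov_eq_self (hK : K < 1) (hΦ : ∀ j, LipschitzWith K (Φ j))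
    (hq : IsLUB (Set.range q) 0) (hμ : IsIdempotentProb μ) (hν : IsIdempotentProb ν)
    (hμfix : maxPlusMarkov Φ q μ = μ) (hνfix : maxPlusMarkov Φ q ν = ν) : μ = ν := by
  funext f
  refine eq_of_forall_dist_le fun ε hε => ?_
  obtain ⟨n, hn⟩ := (eventually_oscillationLE_pow_mul_diam hK f hε).exists
  simpa only [Function.iterate_fixed hμfix, Function.iterate_fixed hνfix] using
    dist_iterate_maxPlusMarkov_le hΦ hq hμ hν hn

end Contraction

section WeightedDistance

variable {X : Type*} [MetricSpace X] {μ ν : C(X, ℝ) → ℝ}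

theorem dLip_nonneg (a : ℝ) (μ ν : C(X, ℝ) → ℝ) : 0 ≤ dLip a μ ν := by
  refine Real.sSup_nonneg ?_
  rintro _ ⟨g, -, rfl⟩
  exact abs_nonneg _

theorem dLip_le {a C : ℝ} (hC : 0 ≤ C)
    (h : ∀ g : C(X, ℝ), LipschitzWith a.toNNReal g → dist (μ g) (ν g) ≤ C) : dLip a μ ν ≤ C := by
  refine Real.sSup_le ?_ hC
  rintro _ ⟨g, hg, rfl⟩
  exact h g hg

theorem dtilde_nonneg {β τ : ℝ} (hβ : 0 ≤ β) (hτ : 0 ≤ τ) (μ ν : C(X, ℝ) → ℝ) :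
    0 ≤ dtilde β τ μ ν :=
  tsum_nonneg fun _ => mul_nonneg (by positivity) (dLip_nonneg _ μ ν)

theorem dtilde_le {β τ C : ℝ} (hβ : 0 < β) (hτ0 : 0 ≤ τ) (hτ1 : τ < 1)
    (h : ∀ i : ℤ, dLip (β ^ i) μ ν ≤ β ^ i * C) :
    dtilde β τ μ ν ≤ (∑' i : ℤ, τ ^ i.natAbs) * C := by
  have hterm (i : ℤ) : τ ^ i.natAbs / β ^ i * dLip (β ^ i) μ ν ≤ τ ^ i.natAbs * C :=
    calc τ ^ i.natAbs / β ^ i * dLip (β ^ i) μ ν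
        ≤ τ ^ i.natAbs / β ^ i * (β ^ i * C) := by gcongr; exact h i
      _ = τ ^ i.natAbs * C := by field_simp
  have hsum := (summable_pow_natAbs hτ0 hτ1).mul_right C
  rw [← tsum_mul_right]
  exact (hsum.of_nonneg_of_le
    (fun _ => mul_nonneg (by positivity) (dLip_nonneg _ μ ν)) hterm).tsum_le_tsum hterm hsum

variable [CompactSpace X] {ι : Type*} {K : NNReal} {Φ : ι → C(X, X)} {q : ι → ℝ}

theorem dLip_iterate_maxPlusMarkov_le (hΦ : ∀ j, LipschitzWith K (Φ j))
    (hq : IsLUB (Set.range q) 0) (hμ : IsIdempotentProb μ) (hν : IsIdempotentProb ν) {a : ℝ}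
    (ha : 0 ≤ a) (n : ℕ) :
    dLip a ((maxPlusMarkov Φ q)^[n] μ) ((maxPlusMarkov Φ q)^[n] ν) ≤
      a * (K ^ n * Metric.diam (Set.univ : Set X)) := by
  refine dLip_le (by positivity) fun g hg => dist_iterate_maxPlusMarkov_le hΦ hq hμ hν ?_
  simpa only [Real.coe_toNNReal a ha] using oscillationLE_of_lipschitzWith hg _

theorem tendsto_dtilde_iterate_maxPlusMarkov (hK : K < 1) (hΦ : ∀ j, LipschitzWith K (Φ j))
    (hq : IsLUB (Set.range q) 0) (hμ : IsIdempotentProb μ) (hν : IsIdempotentProb ν) {β τ : ℝ}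
    (hβ : 0 < β) (hτ0 : 0 ≤ τ) (hτ1 : τ < 1) :
    Tendsto (fun n => dtilde β τ ((maxPlusMarkov Φ q)^[n] μ) ((maxPlusMarkov Φ q)^[n] ν))
      atTop (𝓝 0) := by
  have hbound : Tendsto (fun n : ℕ => (∑' i : ℤ, τ ^ i.natAbs) *
      (K ^ n * Metric.diam (Set.univ : Set X))) atTop (𝓝 0) := by
    simpa using (tendsto_pow_mul_const_nhds_zero K.coe_nonneg hK
      (Metric.diam (Set.univ : Set X))).const_mul (∑' i : ℤ, τ ^ i.natAbs)
  exact squeeze_zero (fun n => dtilde_nonneg hβ.le hτ0 _ _) (fun n => dtilde_le hβ hτ0 hτ1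
    fun i => dLip_iterate_maxPlusMarkov_le hΦ hq hμ hν (zpow_pos hβ i).le n) hbound

end WeightedDistance

theorem mpCIFS_unique_invariant_idempotent_prob_general {X ι : Type*} [MetricSpace X]
    [CompactSpace X] [Nonempty X] {K : NNReal} (hK : K < 1) {Φ : ι → C(X, X)}
    (hΦ : ∀ j, LipschitzWith K (Φ j)) {q : ι → ℝ} (hq : IsLUB (Set.range q) 0) :
    ∃ ν : C(X, ℝ) → ℝ, IsIdempotentProb ν ∧ maxPlusMarkov Φ q ν = ν ∧
      (∀ ν', IsIdempotentProb ν' → maxPlusMarkov Φ q ν' = ν' → ν' = ν) ∧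
      ∀ β τ : ℝ, 0 < β → 0 ≤ τ → τ < 1 → ∀ μ, IsIdempotentProb μ →
        Tendsto (fun n => dtilde β τ ((maxPlusMarkov Φ q)^[n] μ) ν) atTop (𝓝 0) := by
  obtain ⟨ν, hν, hfix⟩ := exists_isIdempotentProb_maxPlusMarkov_eq_self hK hΦ hq
  refine ⟨ν, hν, hfix, fun ν' hν' hfix' => eq_of_maxPlusMarkov_eq_self hK hΦ hq hν' hν hfix' hfix,
    fun β τ hβ hτ0 hτ1 μ hμ => ?_⟩
  simpa only [Function.iterate_fixed hfix] using
    tendsto_dtilde_iterate_maxPlusMarkov hK hΦ hq hμ hν hβ hτ0 hτ1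

theorem mpCIFS_unique_invariant_idempotent_prob
    {X : Type*} [MetricSpace X] [CompactSpace X] [Nonempty X]
    (γ : ℝ) (hγ0 : 0 < γ) (hγ1 : γ < 1)
    (φ : ℕ → X → X) (hφ : ∀ j, LipschitzWith (Real.toNNReal γ) (φ j))
    (q : ℕ → ℝ) (hq : ∀ j, q j ≤ 0) (hqsup : (⨆ j, q j) = 0) :
    ∃ ν : C(X, ℝ) → ℝ, IsIdempotentProb ν ∧
      (fun f : C(X, ℝ) => ⨆ j : ℕ, (q j + ν (f.comp ⟨φ j, (hφ j).continuous⟩))) = ν ∧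
      (∀ ν' : C(X, ℝ) → ℝ, IsIdempotentProb ν' →
        (fun f : C(X, ℝ) => ⨆ j : ℕ, (q j + ν' (f.comp ⟨φ j, (hφ j).continuous⟩))) = ν' →
        ν' = ν) ∧
      (∀ τ : ℝ, γ < τ → τ < 1 → ∀ μ : C(X, ℝ) → ℝ, IsIdempotentProb μ →
        Tendsto (fun n : ℕ => dtilde γ τ
            ((fun (m : C(X, ℝ) → ℝ) (f : C(X, ℝ)) =>
              ⨆ j : ℕ, (q j + m (f.comp ⟨φ j, (hφ j).continuous⟩)))^[n] μ) ν)
          atTop (𝓝 0)) := by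
  obtain ⟨ν, hν, hfix, huniq, hlim⟩ := mpCIFS_unique_invariant_idempotent_prob_general
    (Real.toNNReal_lt_one.mpr hγ1) (Φ := fun j => ⟨φ j, (hφ j).continuous⟩) hφ
    (hqsup ▸ isLUB_ciSup ⟨0, Set.forall_mem_range.mpr hq⟩)
  exact ⟨ν, hν, hfix, huniq, fun τ hγτ => hlim γ τ hγ0 (hγ0.trans hγτ).le⟩
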